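/- Soundness and completeness of H_KT with respect to the RNmatrix RM_KT: for every set of formulas Γ and every formula A, Γ ⊢_{H_KT} A if and only if every valuation v ∈ F_KT that designates all formulas of Γ also designates A. -/

import Mathlib

/-- Formulas of the modal language: propositional variables, negation,
the modality ⊖ (here `box`), and implication. -/
inductive Form : Type
  | var : ℕ → Form
  | neg : Form → Form
  | box : Form → Form
  | imp : Form → Form → Form

/-- A valuation `v = (v1, v2)` over the 4-valued Nmatrix for the minimal modal
logic M: `v1` behaves classically on ¬ and →, and `v1(⊖A) = v2(A)`;
`v2` is otherwise unconstrained. -/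
structure Val where
  v1 : Form → Fin 2
  v2 : Form → Fin 2
  neg_eq : ∀ A, v1 (Form.neg A) = 1 - v1 A
  imp_eq : ∀ A B, v1 (Form.imp A B) = max (1 - v1 A) (v1 B)
  box_eq : ∀ A, v1 (Form.box A) = v2 A

/-- The restriction defining F_K: valuations satisfying the (K) condition. -/
def FK (v : Val) : Prop :=
  ∀ A B : Form, v.v2 (A.imp B) ≤ max (1 - v.v2 A) (v.v2 B)

/-- The restriction defining F_KT. -/
def FKT (v : Val) : Prop :=
  FK v ∧ ∀ A : Form, v.v2 A ≤ v.v1 A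

/-- The Hilbert calculus H_KT: H plus axiom schemas (K) and (T). -/
inductive HKT : Set Form → Form → Prop
  | hyp {Γ A} : A ∈ Γ → HKT Γ A
  | ax1 {Γ} (A B : Form) : HKT Γ (A.imp (B.imp A))
  | ax2 {Γ} (A B C : Form) :
      HKT Γ ((A.imp (B.imp C)).imp ((A.imp B).imp (A.imp C)))
  | ax3 {Γ} (A B : Form) : HKT Γ ((B.neg.imp A.neg).imp (A.imp B))
  | axK {Γ} (A B : Form) :
      HKT Γ ((Form.box (A.imp B)).imp ((Form.box A).imp (Form.box B)))
  | axT {Γ} (A : Form) : HKT Γ ((Form.box A).imp A)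
  | mp {Γ A B} : HKT Γ (A.imp B) → HKT Γ A → HKT Γ B

theorem HKT.mono {Γ Δ : Set Form} {A : Form} (h : HKT Γ A) (hs : Γ ⊆ Δ) : HKT Δ A := by
  induction h with
  | hyp h => exact .hyp (hs h)
  | ax1 A B => exact .ax1 A B
  | ax2 A B C => exact .ax2 A B C
  | ax3 A B => exact .ax3 A B
  | axK A B => exact .axK A B
  | axT A => exact .axT A
  | mp _ _ ih1 ih2 => exact .mp ih1 ih2

theorem HKT.weak {Γ : Set Form} {A B : Form} (h : HKT Γ A) : HKT (insert B Γ) A :=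
  h.mono (Set.subset_insert _ _)

theorem HKT.self {Γ : Set Form} {A : Form} : HKT (insert A Γ) A :=
  .hyp (Set.mem_insert _ _)

theorem HKT.id' {Γ : Set Form} (A : Form) : HKT Γ (A.imp A) :=
  .mp (.mp (.ax2 A (A.imp A) A) (.ax1 _ _)) (.ax1 _ _)

theorem HKT.k {Γ : Set Form} {A B : Form} (h : HKT Γ A) : HKT Γ (B.imp A) :=
  .mp (.ax1 _ _) h

theorem HKT.ded {Γ : Set Form} {A B : Form} (h : HKT (insert A Γ) B) : HKT Γ (A.imp B) := by
  generalize hD : insert A Γ = Δ at h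
  induction h with
  | hyp h =>
    subst hD
    rcases h with rfl | h
    · exact .id' _
    · exact .k (.hyp h)
  | ax1 A B => exact .k (.ax1 A B)
  | ax2 A B C => exact .k (.ax2 A B C)
  | ax3 A B => exact .k (.ax3 A B)
  | axK A B => exact .k (.axK A B)
  | axT A => exact .k (.axT A)
  | mp _ _ ih1 ih2 => exact .mp (.mp (.ax2 _ _ _) ih1) ih2

theorem HKT.exf {Γ : Set Form} {B : Form} (C : Form) (h1 : HKT Γ B.neg) (h2 : HKT Γ B) :
    HKT Γ C :=
  .mp (.mp (.ax3 _ _) (.k h1)) h2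

theorem HKT.dne {Γ : Set Form} {B : Form} (h : HKT Γ B.neg.neg) : HKT Γ B :=
  .mp (.mp (.ax3 _ _) (.mp (.ax3 _ _) (.k h))) h

theorem HKT.byc {Γ : Set Form} {B : Form} (C : Form) (h1 : HKT (insert B.neg Γ) C.neg)
    (h2 : HKT (insert B.neg Γ) C) : HKT Γ B :=
  .mp (.mp (.ax3 (B.imp B) B) (.ded (.exf _ h1 h2))) (.id' B)

theorem HKT.cases' {Γ : Set Form} {A B : Form} (h1 : HKT Γ (B.imp A))
    (h2 : HKT Γ (B.neg.imp A)) : HKT Γ A := by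
  have hn : HKT (insert A.neg Γ) B.neg :=
    .byc A (HKT.self.weak) (.mp h1.weak.weak (HKT.dne .self))
  exact .byc A .self (.mp h2.weak hn)

theorem HKT.compact {Γ : Set Form} {A : Form} (h : HKT Γ A) {c : Set (Set Form)}
    (hc : IsChain (· ⊆ ·) c) (hne : c.Nonempty) (hG : Γ = ⋃₀ c) : ∃ s ∈ c, HKT s A := by
  obtain ⟨s0, hs0⟩ := hne
  induction h with
  | hyp h =>
    subst hG
    obtain ⟨s, hs, h⟩ := h
    exact ⟨s, hs, .hyp h⟩
  | ax1 A B => exact ⟨s0, hs0, .ax1 A B⟩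
  | ax2 A B C => exact ⟨s0, hs0, .ax2 A B C⟩
  | ax3 A B => exact ⟨s0, hs0, .ax3 A B⟩
  | axK A B => exact ⟨s0, hs0, .axK A B⟩
  | axT A => exact ⟨s0, hs0, .axT A⟩
  | mp _ _ ih1 ih2 =>
    obtain ⟨s, hs, h1⟩ := ih1
    obtain ⟨t, ht, h2⟩ := ih2
    rcases hc.total hs ht with h | h
    · exact ⟨t, ht, .mp (h1.mono h) h2⟩
    · exact ⟨s, hs, .mp h1 (h2.mono h)⟩

theorem HKT.sound {Γ : Set Form} {A : Form} (h : HKT Γ A) (v : Val) (hv : FKT v)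
    (hG : ∀ B ∈ Γ, v.v1 B = 1) : v.v1 A = 1 := by
  induction h with
  | hyp h => exact hG _ h
  | ax1 A B =>
    simp only [v.imp_eq]
    generalize v.v1 A = a; generalize v.v1 B = b
    revert a b; decide
  | ax2 A B C =>
    simp only [v.imp_eq]
    generalize v.v1 A = a; generalize v.v1 B = b; generalize v.v1 C = c
    revert a b c; decide
  | ax3 A B =>
    simp only [v.imp_eq, v.neg_eq]
    generalize v.v1 A = a; generalize v.v1 B = b
    revert a b; decide
  | axK A B =>
    have := hv.1 A B
    simp only [v.imp_eq, v.box_eq]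
    revert this
    generalize v.v2 A = a; generalize v.v2 B = b; generalize v.v2 (A.imp B) = c
    revert a b c; decide
  | axT A =>
    have := hv.2 A
    simp only [v.imp_eq, v.box_eq]
    revert this
    generalize v.v2 A = a; generalize v.v1 A = b
    revert a b; decide
  | mp _ _ ih1 ih2 =>
    have h1 := ih1
    have h2 := ih2
    rw [v.imp_eq, h2] at h1
    revert h1
    generalize v.v1 _ = b
    revert b; decide

theorem HKT.complete {Γ : Set Form} {A : Form} (hA : ¬ HKT Γ A) :
    ∃ v : Val, FKT v ∧ (∀ B ∈ Γ, v.v1 B = 1) ∧ v.v1 A ≠ 1 := by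
  classical
  obtain ⟨D, hGD, hD⟩ := zorn_subset_nonempty {s : Set Form | ¬ HKT s A}
    (fun c hc hch hne => ⟨⋃₀ c, fun h => by
      obtain ⟨s, hs, h⟩ := h.compact hch hne rfl
      exact hc hs h, fun s hs => Set.subset_sUnion_of_mem hs⟩) Γ hA
  have hDA : ¬ HKT D A := hD.prop
  have hout : ∀ B, B ∉ D → HKT D (B.imp A) := by
    intro B hB
    by_contra hcon
    have h1 : ¬ HKT (insert B D) A := fun h => hcon h.ded
    exact hB (hD.le_of_ge h1 (Set.subset_insert _ _) (Set.mem_insert _ _))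
  have hcl : ∀ B, HKT D B → B ∈ D := by
    intro B h
    by_contra hB
    exact hDA (.mp (hout B hB) h)
  have hneg : ∀ B, B.neg ∈ D ↔ B ∉ D := by
    intro B
    constructor
    · intro h1 h2
      exact hDA (.exf _ (.hyp h1) (.hyp h2))
    · intro h1
      by_contra h2
      exact hDA (.cases' (hout _ h1) (hout _ h2))
  have himp : ∀ B C, B.imp C ∈ D ↔ (B ∉ D ∨ C ∈ D) := by
    intro B C
    constructor
    · intro h
      by_cases hB : B ∈ D
      · exact .inr (hcl _ (.mp (.hyp h) (.hyp hB)))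
      · exact .inl hB
    · rintro (h | h)
      · exact hcl _ (.mp (.ax3 _ _) (.k (.hyp ((hneg B).2 h))))
      · exact hcl _ (.k (.hyp h))
  refine ⟨⟨fun B => if B ∈ D then 1 else 0, fun B => if B.box ∈ D then 1 else 0,
    ?_, ?_, fun _ => rfl⟩, ⟨?_, ?_⟩, ?_, ?_⟩
  · intro B
    by_cases h : B ∈ D <;> simp [hneg, h]
  · intro B C
    by_cases h : B ∈ D <;> by_cases h' : C ∈ D <;> simp [himp, h, h']
  · intro B C
    have hk := hcl _ (HKT.axK B C)
    rw [himp, himp] at hk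
    by_cases h : B.box ∈ D <;> by_cases h' : C.box ∈ D <;>
      by_cases h'' : (B.imp C).box ∈ D <;> simp_all
  · intro B
    have ht := hcl _ (HKT.axT B)
    rw [himp] at ht
    by_cases h : B.box ∈ D <;> by_cases h' : B ∈ D <;> simp_all
  · intro B hB
    simp [hGD hB]
  · have : A ∉ D := fun h => hDA (.hyp h)
    simp [this]

/-- Soundness and completeness of H_KT w.r.t. the RNmatrix RM_KT. -/
theorem soundness_completeness_HKT (Γ : Set Form) (A : Form) :
    HKT Γ A ↔ ∀ v : Val, FKT v → (∀ B ∈ Γ, v.v1 B = 1) → v.v1 A = 1 := by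
  constructor
  · intro h v hv hG
    exact h.sound v hv hG
  · intro h
    by_contra hA
    obtain ⟨v, hv, hG, hn⟩ := HKT.complete hA
    exact hn (h v hv hG)
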